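/- For every n ≥ 1, the ab-polynomial T(c^{n−1}·a) lies in the subring ℤ⟨c,d⟩, and its image under the unique algebra homomorphism from ℤ⟨c,d⟩ to ℚ[x] sending c to x and d to (x²−1)/2 equals the Chebyshev polynomial of the first kind T_n(x). -/

import Mathlib

open scoped TensorProduct

noncomputable section

namespace Tcheb

/-! ### The algebra `R⟨a,b⟩` of ab-polynomials -/

/-- Words in the two noncommuting letters `a` (encoded `true`) and `b` (encoded `false`). -/
abbrev ABWord : Type := FreeMonoid Bool

/-- The ring `R⟨a,b⟩` of polynomials in two noncommuting variables `a` and `b`. -/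
abbrev AB (R : Type) [CommRing R] : Type := MonoidAlgebra R ABWord

variable (R : Type) [CommRing R]

/-- The ab-monomial corresponding to a word. -/
def word (l : List Bool) : AB R := MonoidAlgebra.of R ABWord (FreeMonoid.ofList l)

/-- The variable `a`. -/
def av : AB R := word R [true]
/-- The variable `b`. -/
def bv : AB R := word R [false]
/-- `c = a + b`. -/
def cv : AB R := av R + bv R
/-- `d = ab + ba`. -/
def dv : AB R := av R * bv R + bv R * av R
/-- `a - b`. -/
def ev : AB R := av R - bv R

/-- The linear map defined by prescribing values on the basis of ab-monomials. -/
def onBasis {M : Type} [AddCommMonoid M] [Module R M] (f : List Bool → M) :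
    AB R →ₗ[R] M :=
  (Finsupp.lift M R ABWord fun w => f (FreeMonoid.toList w)) ∘ₗ
    (MonoidAlgebra.coeffLinearEquiv R).toLinearMap

/-- The algebra map `A` with `A(a) = 1`, `A(b) = 0`. -/
def Amap : AB R →ₐ[R] R :=
  MonoidAlgebra.lift R R ABWord (FreeMonoid.lift fun x => if x then (1 : R) else 0)

/-- The coproduct on `R⟨a,b⟩`: on an ab-monomial `u₁ ⋯ u_k` it is
`Σ_{i=1}^k u₁ ⋯ u_{i-1} ⊗ u_{i+1} ⋯ u_k`. -/
def Delta : AB R →ₗ[R] AB R ⊗[R] AB R :=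
  onBasis R fun w => ∑ i ∈ Finset.range w.length,
    word R (w.take i) ⊗ₜ[R] word R (w.drop (i + 1))

/-- The linear map `C(u) = 2·A(u) + Σ_u A(u₍₁₎)·A(u₍₂₎)`. -/
def Cmap : AB R →ₗ[R] R :=
  2 • (Amap R).toLinearMap +
    (LinearMap.mul' R R ∘ₗ
      TensorProduct.map (Amap R).toLinearMap (Amap R).toLinearMap) ∘ₗ Delta R

/-- `κ(u) = A(u)·(a-b)^(deg u)` on homogeneous `u`, extended linearly. -/
def kappa : AB R →ₗ[R] AB R :=
  onBasis R fun w => Amap R (word R w) • ev R ^ w.length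

/-- `ν(u) = C(u)·(a-b)^(deg u)` on homogeneous `u`, extended linearly. -/
def nuMap : AB R →ₗ[R] AB R :=
  onBasis R fun w => Cmap R (word R w) • ev R ^ w.length

end Tcheb

namespace Tcheb

/-- Cutting a word into the list of segments between the (sorted) cut positions. -/
def segments : List Bool → List ℕ → List (List Bool)
  | l, [] => [l]
  | l, i :: rest => l.take i :: segments (l.drop (i + 1)) (rest.map fun j => j - (i + 1))
  termination_by _ cuts => cuts.length
  decreasing_by simp

variable (R : Type) [CommRing R]

/-- For segments `[s₁, …, s_k]` this is `ν(s₁)·b·ν(s₂)·b ⋯ b·ν(s_{k-1})·b·κ(s_k)`. -/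
def chainProd : List (List Bool) → AB R
  | [] => 1
  | [s] => kappa R (word R s)
  | s :: rest => nuMap R (word R s) * bv R * chainProd rest

/-- The Tchebyshev transform (of the first kind) on ab-polynomials:
`T(u) = Σ_{k ≥ 1} Σ_u ν(u₍₁₎)·b·ν(u₍₂₎)·b ⋯ b·ν(u₍ₖ₋₁₎)·b·κ(u₍ₖ₎)`,
where the inner sum is over the `k`-fold coproduct.  On the ab-monomial basis this
is the sum, over all sets of positions of deleted letters, of the corresponding
products over the resulting segments. -/
def Tmap : AB R →ₗ[R] AB R :=
  onBasis R fun w => ∑ S : Finset (Fin w.length),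
    chainProd R (segments w ((S.sort (· ≤ ·)).map Fin.val))

/-- The `ω` map on a word: replace each occurrence of `ab` by `2d` and all
remaining letters by `c`. -/
def omegaWord : List Bool → AB R
  | [] => 1
  | true :: false :: rest => (2 * dv R) * omegaWord rest
  | _ :: rest => cv R * omegaWord rest

/-- The `ω` map of Billera–Ehrenborg–Readdy. -/
def omegaMap : AB R →ₗ[R] AB R := onBasis R fun w => omegaWord R w

/-- The reversal involution `u ↦ u*` of ab-polynomials. -/
def revMap : AB R →ₗ[R] AB R := onBasis R fun w => word R w.reverse

/-- `H*(1) = 0` and `H*(u·a) = H*(u·b) = u`. -/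
def Hstar : AB R →ₗ[R] AB R :=
  onBasis R fun w => if w = [] then 0 else word R w.dropLast

/-- The Tchebyshev transform of the second kind `U(u) = H*(T(u·a))`. -/
def Umap : AB R →ₗ[R] AB R := Hstar R ∘ₗ Tmap R ∘ₗ LinearMap.mulRight R (av R)

/-- `σ(u) = Σ_u κ(u₍₁₎)·b·T(u₍₂₎)`. -/
def sigmaMap : AB R →ₗ[R] AB R :=
  LinearMap.mul' R (AB R) ∘ₗ
    TensorProduct.map (LinearMap.mulRight R (bv R) ∘ₗ kappa R) (Tmap R) ∘ₗ Delta R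

/-! ### Graded posets and the ab-index -/

/-- `rk` is a rank function for a bounded poset: `rk ⊥ = 0` and covers raise rank by one. -/
def IsRankFun (α : Type) [PartialOrder α] [OrderBot α] (rk : α → ℕ) : Prop :=
  rk ⊥ = 0 ∧ ∀ x y : α, x ⋖ y → rk y = rk x + 1

/-- `f` lists the elements of a chain in increasing order with respect to the
strict order relation `lt`. -/
def IsStrictChain {α : Type} (lt : α → α → Prop) {n : ℕ} (f : Fin (n + 1) → α) : Prop :=
  ∀ i j : Fin (n + 1), i < j → lt (f i) (f j)

/-- The weight of a chain `x₀ < x₁ < ⋯ < x_k`: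
`(a-b)^{ρ(x₀,x₁)-1}·b·(a-b)^{ρ(x₁,x₂)-1}·b ⋯ b·(a-b)^{ρ(x_{k-1},x_k)-1}`. -/
def chainWt {α : Type} (rk : α → ℕ) {n : ℕ} (f : Fin (n + 1) → α) : AB R :=
  (List.intersperse (bv R)
    (List.ofFn fun i : Fin n => ev R ^ (rk (f i.succ) - rk (f i.castSucc) - 1))).prod

/-- The ab-index `Ψ` of the graded poset with strict order relation `lt`, rank
function `rk`, minimum `b` and maximum `t`: the sum of the weights of all chains
from `b` to `t`. -/
def PsiRel {α : Type} (lt : α → α → Prop) (rk : α → ℕ) (b t : α) : AB R :=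
  ∑ᶠ (n : ℕ), ∑ᶠ (f : Fin (n + 1) → α)
    (_ : IsStrictChain lt f ∧ f 0 = b ∧ f (Fin.last n) = t), chainWt R rk f

end Tcheb

namespace Tcheb

/-! ### The Tchebyshev transform of a graded poset -/

section TPoset

variable (α : Type) [PartialOrder α] [BoundedOrder α]

/-- The elements `[x,y]` of the Tchebyshev transform: intervals of `P ∪ {-1̂}`,
i.e. pairs `(x,y)` with `x ∈ P ∪ {-1̂}`, `y ∈ P` and `x < y`. -/
def TPel : Type := {p : WithBot α × α // p.1 < (p.2 : WithBot α)}

/-- The underlying set of the Tchebyshev transform `T(P)`: the intervals `[x,y]`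
together with a new maximum element (`none`). -/
def TP : Type := Option (TPel α)

/-- The cover relation of the Tchebyshev transform `T(P)`:
`[x,y] ⋖ [y,w]` and `[x,y] ⋖ [x,w]` whenever `y ⋖ w` in `P`, and `[x,1̂] ⋖ 1̂_{T(P)}`. -/
inductive TPcov : TP α → TP α → Prop
  | up {x : WithBot α} {y w : α} (h1 : x < (y : WithBot α))
      (h2 : (y : WithBot α) < (w : WithBot α)) (hc : y ⋖ w) :
      TPcov (some ⟨(x, y), h1⟩) (some ⟨((y : WithBot α), w), h2⟩)
  | same {x : WithBot α} {y w : α} (h1 : x < (y : WithBot α))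
      (h2 : x < (w : WithBot α)) (hc : y ⋖ w) :
      TPcov (some ⟨(x, y), h1⟩) (some ⟨(x, w), h2⟩)
  | top {x : WithBot α} (h1 : x < ((⊤ : α) : WithBot α)) :
      TPcov (some ⟨(x, (⊤ : α)), h1⟩) none

/-- The strict order relation of `T(P)`, generated by the cover relation. -/
def TPlt : TP α → TP α → Prop := Relation.TransGen (TPcov α)

/-- The order relation of `T(P)`, generated by the cover relation. -/
def TPle : TP α → TP α → Prop := Relation.ReflTransGen (TPcov α)

/-- The minimum element `[-1̂, 0̂]` of `T(P)`. -/
def TPbot : TP α := some ⟨((⊥ : WithBot α), (⊥ : α)), WithBot.bot_lt_coe _⟩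

/-- The maximum element `1̂_{T(P)}` of `T(P)`. -/
def TPtop : TP α := none

/-- The rank function of `T(P)`: `ρ([x,y]) = ρ(y)` and `ρ(1̂_{T(P)}) = ρ(P) + 1`. -/
def TPrk (rk : α → ℕ) : TP α → ℕ
  | some p => rk p.1.2
  | none => rk (⊤ : α) + 1

theorem TPbot_ne_TPtop : TPbot α ≠ TPtop α := by
  simp only [TPbot, TPtop]
  exact Option.some_ne_none _

/-- The map `z : T(P) → P ∪ {2̂}` with `z([x,y]) = y` and `z(1̂_{T(P)}) = 2̂`. -/
def zmap : TP α → WithTop α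
  | some p => (p.1.2 : WithTop α)
  | none => ⊤

/-- The number of elements of the interval `[u,v]` of `P`, for `u, v ∈ P ∪ {2̂}`. -/
def intervalCard (u v : WithTop α) : ℕ :=
  Set.ncard {t : α | u ≤ (t : WithTop α) ∧ (t : WithTop α) ≤ v}

end TPoset

/-! ### The dual diamond product -/

/-- The strict order relation of the dual diamond product
`P ◇* Q = ((P ∖ {1̂}) × (Q ∖ {1̂})) ∪ {1̂}` (with `none` the new maximum), built from
the order relations `leA, ltA` and `leB, ltB` of the two factors. -/
def dsLT {A B : Type} (leA ltA : A → A → Prop) (leB ltB : B → B → Prop) :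
    Option (A × B) → Option (A × B) → Prop
  | some p, some q => (leA p.1 q.1 ∧ leB p.2 q.2) ∧ (ltA p.1 q.1 ∨ ltB p.2 q.2)
  | some _, none => True
  | none, _ => False

/-! ### EL-labelings -/

/-- The list of edge labels along a chain (given as a list of poset elements). -/
def labelsList {α Λ : Type} (lam : α → α → Λ) (l : List α) : List Λ :=
  (l.zip l.tail).map fun p => lam p.1 p.2

/-- `l` is a maximal (saturated) chain of the interval `[x,y]` with respect to the
cover relation `cov`: it runs from `x` to `y` and every step is a cover. -/
def IsMaxChainList {α : Type} (cov : α → α → Prop) (x y : α) (l : List α) : Prop :=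
  l.head? = some x ∧ l.getLast? = some y ∧ l.Chain' cov

/-- An `EL`-labeling of the poset whose cover relation is `cov`, with labels in the
linearly ordered set `(Λ, lle, llt)`: every interval has a unique rising maximal
chain, which moreover is lexicographically least among all maximal chains of the
interval. -/
def IsELLabeling (α Λ : Type) (lle llt : Λ → Λ → Prop)
    (cov : α → α → Prop) (lam : α → α → Λ) : Prop :=
  ∀ x y : α, Relation.ReflTransGen cov x y →
    ∃ l : List α, (IsMaxChainList cov x y l ∧ (labelsList lam l).Chain' lle) ∧
      (∀ l' : List α, IsMaxChainList cov x y l' →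
        (labelsList lam l').Chain' lle → l' = l) ∧
      (∀ l' : List α, IsMaxChainList cov x y l' →
        labelsList lam l = labelsList lam l' ∨
          List.Lex llt (labelsList lam l) (labelsList lam l'))

/-! ### Eulerian posets -/

/-- A graded poset is Eulerian if every nontrivial interval `[x,y]` has the
same number of elements of even rank as of odd rank. -/
def IsEulerian (α : Type) [PartialOrder α] (rk : α → ℕ) : Prop :=
  ∀ x y : α, x < y →
    Set.ncard {z : α | x ≤ z ∧ z ≤ y ∧ Even (rk z)} =
      Set.ncard {z : α | x ≤ z ∧ z ≤ y ∧ ¬ Even (rk z)}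

/-! ### The face lattice of the crosspolytope -/

/-- A face of the `n`-dimensional crosspolytope: a partial sign vector, i.e. the
pair `(S, ε)` of a subset `S ⊆ {1,…,n}` (the set of coordinates where the function
takes a value `some`) together with a sign function `ε` on `S`. -/
def CrossEl (n : ℕ) : Type := Fin n → Option Bool

/-- `(S,ε) ≤ (T,δ)` iff `S ⊆ T` and `δ` restricted to `S` is `ε`. -/
instance (n : ℕ) : PartialOrder (CrossEl n) where
  le f g := ∀ i s, f i = some s → g i = some s
  le_refl f i s h := h
  le_trans f g h fg gh i s hi := gh i s (fg i s hi)
  le_antisymm f g fg gf := by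
    funext i
    cases hf : f i with
    | some s => exact (fg i s hf).symm
    | none =>
      cases hg : g i with
      | some s => exact absurd (gf i s hg) (by simp [hf])
      | none => rfl

/-- The face lattice of the `n`-dimensional crosspolytope: all partial sign
vectors together with a new maximum element. -/
abbrev Cross (n : ℕ) : Type := WithTop (CrossEl n)

/-- The rank function of the face lattice of the crosspolytope:
`ρ(S,ε) = |S|` and the maximum has rank `n + 1`. -/
def crossRk (n : ℕ) : Cross n → ℕ
  | none => n + 1
  | some f => (Finset.univ.filter fun i : Fin n => (f i).isSome).card

/-- The minimal element (the empty face) of the crosspolytope face lattice. -/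
def crossBot (n : ℕ) : Cross n := WithTop.some (fun _ => none)

/-- The maximal element of the crosspolytope face lattice. -/
def crossTop (n : ℕ) : Cross n := ⊤

/-! ### Quasisymmetric functions -/

/-- The monomial quasisymmetric function `M_{(p₁,…,p_k)}`, as a formal power
series in the countably many commuting variables `t₁, t₂, …` (indexed by `ℕ`). -/
def MQ (R : Type) [CommRing R] (ps : List ℕ) : MvPowerSeries ℕ R :=
  fun m => if ((m.support.sort (· ≤ ·)).map fun i => m i) = ps then 1 else 0

/-- The `t`-part of a monomial in the variables `s` (index `none`) and
`t₁, t₂, …` (indices `some i`). -/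
def tpart (m : Option ℕ →₀ ℕ) : ℕ →₀ ℕ :=
  Finsupp.comapDomain some m (Option.some_injective ℕ).injOn

/-- The type B monomial quasisymmetric function `s^p · M_{(p₁,…,p_k)}`, a formal
power series in the variables `s` (index `none`) and `t₁, t₂, …` (indices `some i`). -/
def MB (R : Type) [CommRing R] (p : ℕ) (ps : List ℕ) : MvPowerSeries (Option ℕ) R :=
  fun m => if m none = p ∧
      (((tpart m).support.sort (· ≤ ·)).map fun i => tpart m i) = ps then 1 else 0

/-- The quasisymmetric function `F(P)` of the graded poset with strict order
relation `lt`, rank function `rk`, minimum `b` and maximum `t`: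
`F(P) = Σ_c M_{(ρ(x₀,x₁),…,ρ(x_{k-1},x_k))}` over all chains `c` from `b` to `t`. -/
def FQ (R : Type) [CommRing R] {α : Type} (lt : α → α → Prop) (rk : α → ℕ)
    (b t : α) : MvPowerSeries ℕ R :=
  ∑ᶠ (n : ℕ), ∑ᶠ (f : Fin (n + 1) → α)
    (_ : IsStrictChain lt f ∧ f 0 = b ∧ f (Fin.last n) = t),
    MQ R (List.ofFn fun i : Fin n => rk (f i.succ) - rk (f i.castSucc))

/-- The type B quasisymmetric function `F_B(P) = Σ_{0̂ < x ≤ 1̂} s^{ρ(x)-1}·F([x,1̂])`,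
written as a sum over all chains `0̂ < x₀ < x₁ < ⋯ < x_k = 1̂` of
`s^{ρ(x₀)-1}·M_{(ρ(x₀,x₁),…,ρ(x_{k-1},x_k))}`. -/
def FB (R : Type) [CommRing R] {α : Type} (lt : α → α → Prop) (rk : α → ℕ)
    (b t : α) : MvPowerSeries (Option ℕ) R :=
  ∑ᶠ (n : ℕ), ∑ᶠ (f : Fin (n + 1) → α)
    (_ : IsStrictChain lt f ∧ lt b (f 0) ∧ f (Fin.last n) = t),
    MB R (rk (f 0) - 1) (List.ofFn fun i : Fin n => rk (f i.succ) - rk (f i.castSucc))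

/-! ### Characters and the chain maps -/

/-- A character on `k⟨a,b⟩`: a linear functional which is multiplicative with
respect to Cartesian products of graded posets (of rank at least 1). -/
def IsCharacter (k : Type) [Field k] (G : AB k →ₗ[k] k) : Prop :=
  ∀ (α β : Type) [Fintype α] [Fintype β] [PartialOrder α] [PartialOrder β]
    [BoundedOrder α] [BoundedOrder β], ∀ (rkα : α → ℕ) (rkβ : β → ℕ),
    IsRankFun α rkα → IsRankFun β rkβ → 1 ≤ rkα ⊤ → 1 ≤ rkβ ⊤ →
    G (PsiRel k (· < ·) (fun p : α × β => rkα p.1 + rkβ p.2)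
        ((⊥ : α), (⊥ : β)) ((⊤ : α), (⊤ : β))) =
      G (PsiRel k (· < ·) rkα ⊥ ⊤) * G (PsiRel k (· < ·) rkβ ⊥ ⊤)

/-- The quasisymmetric function image `g̃F(P)` of the chain map of the second kind:
`Σ_c G(Ψ([x₀,x₁])) ⋯ G(Ψ([x_{k-1},x_k])) · M_{(ρ(x₀,x₁),…,ρ(x_{k-1},x_k))}`,
summed over all chains `c = {b = x₀ < ⋯ < x_k = t}`. -/
def gtF (k : Type) [Field k] (G : AB k →ₗ[k] k) {α : Type} (lt : α → α → Prop)
    (rk : α → ℕ) (b t : α) : MvPowerSeries ℕ k :=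
  ∑ᶠ (n : ℕ), ∑ᶠ (f : Fin (n + 1) → α)
    (_ : IsStrictChain lt f ∧ f 0 = b ∧ f (Fin.last n) = t),
    (∏ i : Fin n, G (PsiRel k lt rk (f i.castSucc) (f i.succ))) •
      MQ k (List.ofFn fun i : Fin n => rk (f i.succ) - rk (f i.castSucc))

/-- The type B quasisymmetric function image `gF_B(P) = Σ_{0̂ < x ≤ 1̂}
s^{ρ(x)-1}·g̃F([x,1̂])` of the chain map of the first kind, written as a sum over
all chains `0̂ < x₀ < ⋯ < x_k = 1̂`. -/
def gFB (k : Type) [Field k] (G : AB k →ₗ[k] k) {α : Type} (lt : α → α → Prop)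
    (rk : α → ℕ) (b t : α) : MvPowerSeries (Option ℕ) k :=
  ∑ᶠ (n : ℕ), ∑ᶠ (f : Fin (n + 1) → α)
    (_ : IsStrictChain lt f ∧ lt b (f 0) ∧ f (Fin.last n) = t),
    (∏ i : Fin n, G (PsiRel k lt rk (f i.castSucc) (f i.succ))) •
      MB k (rk (f 0) - 1) (List.ofFn fun i : Fin n => rk (f i.succ) - rk (f i.castSucc))

/-- The space of homogeneous ab-polynomials of degree `n`. -/
def ABhomog (k : Type) [Field k] (n : ℕ) : Submodule k (AB k) :=
  Submodule.span k {x : AB k | ∃ w : List Bool, w.length = n ∧ x = word k w}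

section Helpers

variable (R : Type) [CommRing R]

theorem onBasis_word {M : Type} [AddCommMonoid M] [Module R M] (f : List Bool → M)
    (l : List Bool) : onBasis R f (word R l) = f l := by
  simp [onBasis, word, MonoidAlgebra.of]

theorem word_append (l m : List Bool) : word R (l ++ m) = word R l * word R m := by
  simp [word, ← map_mul, FreeMonoid.ofList_append]

theorem word_nil : word R [] = 1 := by
  exact map_one (MonoidAlgebra.of R ABWord)

theorem Amap_nil : Amap R (word R []) = 1 := by simp [word_nil]

theorem Amap_snoc_true (p : List Bool) :
    Amap R (word R (p ++ [true])) = Amap R (word R p) := by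
  rw [word_append, map_mul]
  simp [Amap, word]

theorem Amap_snoc_false (p : List Bool) :
    Amap R (word R (p ++ [false])) = 0 := by
  rw [word_append, map_mul]
  simp [Amap, word]

theorem Cmap_word (w : List Bool) : Cmap R (word R w) = 2 * Amap R (word R w) +
    ∑ i ∈ Finset.range w.length,
      Amap R (word R (w.take i)) * Amap R (word R (w.drop (i + 1))) := by
  simp [Cmap, Delta, onBasis_word]

theorem Cmap_nil : Cmap R (word R []) = 2 := by
  simp [Cmap_word, Amap_nil]

theorem Cmap_snoc (p : List Bool) (x : Bool) :
    Cmap R (word R (p ++ [x])) = 2 * Amap R (word R (p ++ [x])) + Amap R (word R p) +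
      ∑ i ∈ Finset.range p.length,
        Amap R (word R (p.take i)) * Amap R (word R (p.drop (i + 1) ++ [x])) := by
  rw [Cmap_word]
  rw [List.length_append, List.length_singleton, Finset.sum_range_succ]
  have h : ∀ i ∈ Finset.range p.length,
      Amap R (word R ((p ++ [x]).take i)) * Amap R (word R ((p ++ [x]).drop (i + 1))) =
      Amap R (word R (p.take i)) * Amap R (word R (p.drop (i + 1) ++ [x])) := by
    intro i hi
    have hi' := Finset.mem_range.1 hi
    rw [List.take_append_of_le_length hi'.le, List.drop_append_of_le_length hi']
  rw [Finset.sum_congr rfl h]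
  simp [Amap_nil]
  ring

theorem Cmap_snoc_true (p : List Bool) :
    Cmap R (word R (p ++ [true])) = Cmap R (word R p) + Amap R (word R p) := by
  rw [Cmap_snoc, Cmap_word]
  simp only [Amap_snoc_true]
  ring

theorem Cmap_snoc_false (p : List Bool) :
    Cmap R (word R (p ++ [false])) = Amap R (word R p) := by
  rw [Cmap_snoc]
  simp [Amap_snoc_false]

theorem sum_finset_fin_succ {M : Type} [AddCommMonoid M] (n : ℕ)
    (f : Finset (Fin (n + 1)) → M) :
    ∑ S : Finset (Fin (n + 1)), f S =
      ∑ S : Finset (Fin n), f (S.map (Fin.succEmb n)) +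
      ∑ S : Finset (Fin n), f (insert 0 (S.map (Fin.succEmb n))) := by
  classical
  have h0 : (0 : Fin (n + 1)) ∉ (Finset.univ : Finset (Fin n)).map (Fin.succEmb n) := by
    simp
  have hu : (Finset.univ : Finset (Finset (Fin (n + 1)))) =
      (insert 0 ((Finset.univ : Finset (Fin n)).map (Fin.succEmb n))).powerset := by
    rw [← Finset.powerset_univ, Fin.univ_succ, Finset.cons_eq_insert]
    rfl
  have hp : ((Finset.univ : Finset (Fin n)).map (Fin.succEmb n)).powerset =
      (Finset.univ : Finset (Finset (Fin n))).map
        (Finset.mapEmbedding (Fin.succEmb n)).toEmbedding := by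
    ext S
    simp only [Finset.mem_powerset, Finset.subset_map_iff, Finset.mem_map, Finset.mem_univ,
      true_and, Finset.subset_univ]
    constructor
    · rintro ⟨u, h⟩; exact ⟨u, h.symm⟩
    · rintro ⟨u, h⟩; exact ⟨u, h.symm⟩
  rw [hu, Finset.sum_powerset_insert h0, hp]
  simp

/-- The sorted list of cut positions. -/
def cutList {n : ℕ} (S : Finset (Fin n)) : List ℕ := (S.sort (· ≤ ·)).map Fin.val

theorem cutList_map {n : ℕ} (S : Finset (Fin n)) :
    cutList (S.map (Fin.succEmb n)) = (cutList S).map (· + 1) := by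
  unfold cutList
  rw [← Finset.map_sort (Fin.succEmb n) S (· ≤ ·) (· ≤ ·) (by simp)]
  simp

theorem cutList_insert {n : ℕ} (S : Finset (Fin n)) :
    cutList (insert 0 (S.map (Fin.succEmb n))) = 0 :: (cutList S).map (· + 1) := by
  rw [← cutList_map]
  unfold cutList
  rw [Finset.sort_insert (r := (· ≤ ·)) (by simp) (by simp)]
  simp

theorem segments_ne_nil (l : List Bool) (c : List ℕ) : segments l c ≠ [] := by
  cases c <;> simp [segments]

theorem chainProd_cons (s : List Bool) (r : List (List Bool)) (hr : r ≠ []) :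
    chainProd R (s :: r) = nuMap R (word R s) * bv R * chainProd R r := by
  cases r with
  | nil => exact absurd rfl hr
  | cons t r => rfl

/-- The transform of `w` with a prefix `p` in which no cut is made. -/
def Spre (p w : List Bool) : AB R := ∑ S : Finset (Fin w.length),
    chainProd R (segments (p ++ w) ((cutList S).map (· + p.length)))

theorem Spre_nil (p : List Bool) : Spre R p [] = kappa R (word R p) := by
  have : ∀ S : Finset (Fin ([] : List Bool).length), cutList S = [] := by
    intro S
    have : S = ∅ := by
      ext i; exact i.elim0
    simp [this, cutList]
  simp only [Spre, this, List.map_nil, segments, chainProd, List.append_nil]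
  simp [List.length_nil]

theorem Spre_cons (p w : List Bool) (x : Bool) :
    Spre R p (x :: w) = Spre R (p ++ [x]) w + nuMap R (word R p) * bv R * Spre R [] w := by
  unfold Spre
  have key := sum_finset_fin_succ w.length (fun S =>
    chainProd R (segments (p ++ x :: w) ((cutList S).map (· + p.length))))
  refine key.trans ?_
  congr 1
  · refine Finset.sum_congr rfl fun S _ => ?_
    rw [cutList_map]
    congr 2
    · simp
    · simp [Function.comp_def]
      intro a _
      omega
  · rw [Finset.mul_sum]
    refine Finset.sum_congr rfl fun S _ => ?_
    rw [cutList_insert]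
    simp only [List.map_cons, zero_add, segments]
    rw [chainProd_cons _ _ _ (segments_ne_nil _ _)]
    congr 3
    · simp
    · simp
    · rw [List.map_map, List.map_map]
      conv_rhs => rw [← List.map_id (cutList S)]
      simp only [List.length_nil, List.map_map]
      refine List.map_congr_left fun a _ => ?_
      simp only [Function.comp_apply, id]
      omega

/-- Linear extension of `Spre`. -/
def Lpre (p : List Bool) : AB R →ₗ[R] AB R := onBasis R (Spre R p)

theorem Lpre_nil : Lpre R [] = Tmap R := by
  unfold Lpre Tmap
  congr 1
  funext w
  simp [Spre, cutList, Function.comp_def]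

theorem ab_ext {M : Type} [AddCommMonoid M] [Module R M] (f g : AB R →ₗ[R] M)
    (h : ∀ w, f (word R w) = g (word R w)) : f = g := by
  apply MonoidAlgebra.lhom_ext'
  intro w
  ext
  simpa [word] using h (FreeMonoid.toList w)

theorem Lpre_mul (p : List Bool) (x : Bool) (u : AB R) :
    Lpre R p (word R [x] * u) =
      Lpre R (p ++ [x]) u + nuMap R (word R p) * bv R * Tmap R u := by
  rw [← Lpre_nil]
  have : Lpre R p ∘ₗ LinearMap.mulLeft R (word R [x]) =
      Lpre R (p ++ [x]) + LinearMap.mulLeft R (nuMap R (word R p) * bv R) ∘ₗ Lpre R [] := by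
    apply ab_ext
    intro w
    simp only [LinearMap.comp_apply, LinearMap.add_apply, LinearMap.mulLeft_apply,
      ← word_append]
    simp only [Lpre, onBasis_word]
    exact Spre_cons R p w x
  exact LinearMap.congr_fun this u

mutual
/-- Coefficient of `A(p)`. -/
def Uc : ℕ → AB R
  | 0 => ev R
  | m + 1 => ev R * (Uc m + 2 * Vc m)
/-- Coefficient of `C(p)`. -/
def Vc : ℕ → AB R
  | 0 => bv R
  | m + 1 => ev R * Vc m + 2 * bv R * (Uc m + 2 * Vc m)
end

theorem Lpre_ladder (m : ℕ) : ∀ p : List Bool, Lpre R p (cv R ^ m * av R) =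
    ev R ^ p.length * (Amap R (word R p) • Uc R m + Cmap R (word R p) • Vc R m) := by
  induction m with
  | zero =>
    intro p
    have h := Lpre_mul R p true (word R [])
    rw [word_nil, mul_one, ← word_nil] at h
    rw [pow_zero, one_mul, av, h, ← Lpre_nil]
    simp only [Lpre, onBasis_word, Spre_nil, kappa, nuMap, Amap_snoc_true, Amap_nil, Uc, Vc]
    simp [pow_succ, mul_add]
  | succ m ih =>
    intro p
    have hT : Tmap R (cv R ^ m * av R) = Uc R m + 2 * Vc R m := by
      rw [← Lpre_nil, ih]
      simp [Amap_nil, Cmap_nil, two_smul, two_mul]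
    have hc : cv R ^ (m + 1) * av R =
        word R [true] * (cv R ^ m * av R) + word R [false] * (cv R ^ m * av R) := by
      rw [pow_succ', mul_assoc, ← add_mul]; rfl
    rw [hc, map_add, Lpre_mul, Lpre_mul, ih, ih, hT]
    simp only [nuMap, onBasis_word, Amap_snoc_true, Amap_snoc_false, Cmap_snoc_true,
      Cmap_snoc_false, Uc, Vc, List.length_append, List.length_singleton, pow_succ]
    simp only [mul_add, add_smul, smul_add, zero_smul, mul_smul_comm, smul_mul_assoc, two_mul,
      zero_add, add_mul, mul_assoc]
    abel

theorem Tmap_ladder (m : ℕ) : Tmap R (cv R ^ m * av R) = Uc R m + 2 * Vc R m := by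
  rw [← Lpre_nil, Lpre_ladder]
  simp [Amap_nil, Cmap_nil, two_smul, two_mul]

theorem ladder_zero : Tmap R (cv R ^ 0 * av R) = cv R := by
  rw [Tmap_ladder]
  simp only [Uc, Vc, cv, ev]
  noncomm_ring

theorem ladder_one : Tmap R (cv R ^ 1 * av R) =
    2 * cv R * cv R - (cv R * cv R - 2 * dv R) := by
  rw [Tmap_ladder]
  simp only [Uc, Vc, cv, ev, dv]
  noncomm_ring

theorem ladder_succ (m : ℕ) : Tmap R (cv R ^ (m + 2) * av R) =
    2 * cv R * Tmap R (cv R ^ (m + 1) * av R) -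
      (cv R * cv R - 2 * dv R) * Tmap R (cv R ^ m * av R) := by
  rw [Tmap_ladder, Tmap_ladder, Tmap_ladder]
  simp only [Uc, Vc, cv, ev, dv]
  noncomm_ring

end Helpers

theorem tchebyshev_of_ladder (n : ℕ) (hn : 1 ≤ n) :
    Tmap ℚ (cv ℚ ^ (n - 1) * av ℚ) ∈
        Algebra.adjoin ℚ ({cv ℚ, dv ℚ} : Set (AB ℚ)) ∧
    ∀ (h : Tmap ℚ (cv ℚ ^ (n - 1) * av ℚ) ∈
        Algebra.adjoin ℚ ({cv ℚ, dv ℚ} : Set (AB ℚ)))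
      (φ : Algebra.adjoin ℚ ({cv ℚ, dv ℚ} : Set (AB ℚ)) →ₐ[ℚ] Polynomial ℚ),
      φ ⟨cv ℚ, Algebra.subset_adjoin (Set.mem_insert _ _)⟩ = Polynomial.X →
      φ ⟨dv ℚ, Algebra.subset_adjoin (Set.mem_insert_of_mem _ rfl)⟩ =
        Polynomial.C (1 / 2 : ℚ) * (Polynomial.X ^ 2 - 1) →
      φ ⟨_, h⟩ = Polynomial.Chebyshev.T ℚ (n : ℤ) := by
  have main : ∀ m : ℕ, ∃ h : Tmap ℚ (cv ℚ ^ m * av ℚ) ∈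
        Algebra.adjoin ℚ ({cv ℚ, dv ℚ} : Set (AB ℚ)),
      ∀ (φ : Algebra.adjoin ℚ ({cv ℚ, dv ℚ} : Set (AB ℚ)) →ₐ[ℚ] Polynomial ℚ),
      φ ⟨cv ℚ, Algebra.subset_adjoin (Set.mem_insert _ _)⟩ = Polynomial.X →
      φ ⟨dv ℚ, Algebra.subset_adjoin (Set.mem_insert_of_mem _ rfl)⟩ =
        Polynomial.C (1 / 2 : ℚ) * (Polynomial.X ^ 2 - 1) →
      φ ⟨_, h⟩ = Polynomial.Chebyshev.T ℚ ((m + 1 : ℕ) : ℤ) := by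
    have hc : cv ℚ ∈ Algebra.adjoin ℚ ({cv ℚ, dv ℚ} : Set (AB ℚ)) :=
      Algebra.subset_adjoin (Set.mem_insert _ _)
    have hd : dv ℚ ∈ Algebra.adjoin ℚ ({cv ℚ, dv ℚ} : Set (AB ℚ)) :=
      Algebra.subset_adjoin (Set.mem_insert_of_mem _ rfl)
    have he : ∀ (φ : Algebra.adjoin ℚ ({cv ℚ, dv ℚ} : Set (AB ℚ)) →ₐ[ℚ] Polynomial ℚ),
        φ ⟨cv ℚ, hc⟩ = Polynomial.X →
        φ ⟨dv ℚ, hd⟩ = Polynomial.C (1 / 2 : ℚ) * (Polynomial.X ^ 2 - 1) →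
        φ (⟨cv ℚ, hc⟩ * ⟨cv ℚ, hc⟩ - 2 * ⟨dv ℚ, hd⟩) = 1 := by
      intro φ h1 h2
      have h3 : (2 : Polynomial ℚ) * Polynomial.C (1 / 2 : ℚ) = 1 := by
        rw [← map_ofNat Polynomial.C 2, ← map_mul]
        norm_num
      rw [map_sub, map_mul, map_mul, h1, h2, map_ofNat, ← mul_assoc, h3]
      ring
    intro m
    induction m using Nat.twoStepInduction with
    | zero =>
      refine ⟨by rw [ladder_zero]; exact hc, fun φ h1 _ => ?_⟩
      simp only [ladder_zero]
      simpa using h1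
    | one =>
      have heq : Tmap ℚ (cv ℚ ^ 1 * av ℚ) = ((2 * ⟨cv ℚ, hc⟩ * ⟨cv ℚ, hc⟩ -
          (⟨cv ℚ, hc⟩ * ⟨cv ℚ, hc⟩ - 2 * ⟨dv ℚ, hd⟩) :
          Algebra.adjoin ℚ ({cv ℚ, dv ℚ} : Set (AB ℚ))) : AB ℚ) := by
        rw [ladder_one]; rfl
      refine ⟨by rw [heq]; exact Subtype.property _, fun φ h1 h2 => ?_⟩
      simp only [heq, Subtype.coe_eta]
      rw [map_sub, he φ h1 h2, map_mul, map_mul, map_ofNat, h1]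
      have := Polynomial.Chebyshev.T_two ℚ
      norm_num
      rw [this]
      ring
    | more m ih1 ih2 =>
      obtain ⟨m1, f1⟩ := ih1
      obtain ⟨m2, f2⟩ := ih2
      have heq : Tmap ℚ (cv ℚ ^ (m + 2) * av ℚ) = ((2 * ⟨cv ℚ, hc⟩ * ⟨_, m2⟩ -
          (⟨cv ℚ, hc⟩ * ⟨cv ℚ, hc⟩ - 2 * ⟨dv ℚ, hd⟩) * ⟨_, m1⟩ :
          Algebra.adjoin ℚ ({cv ℚ, dv ℚ} : Set (AB ℚ))) : AB ℚ) := by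
        rw [ladder_succ]; rfl
      refine ⟨by rw [heq]; exact Subtype.property _, fun φ h1 h2 => ?_⟩
      simp only [heq, Subtype.coe_eta]
      rw [map_sub, map_mul, map_mul φ (_ - _), he φ h1 h2, map_mul, map_ofNat, h1,
        f1 φ h1 h2, f2 φ h1 h2]
      have := Polynomial.Chebyshev.T_add_two ℚ ((m + 1 : ℕ) : ℤ)
      push_cast at this ⊢
      rw [show (m : ℤ) + 2 + 1 = m + 1 + 2 by ring, this]
      ring
  obtain ⟨m, rfl⟩ : ∃ m, n = m + 1 := ⟨n - 1, by omega⟩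
  obtain ⟨h, f⟩ := main m
  exact ⟨h, fun _ => f⟩

end Tcheb
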